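/- Let n ≥ 2. If f, f' : ℝⁿ → ℝⁿ are proper gradient maps with no zeros, then f and f' are proper gradient homotopic. -/

import Mathlib

/-!
Let `D t x = (1 + t‖x‖²) x`, the gradient of a convex radial function, so that its derivative
`A t x` is symmetric and expands every vector by a factor at least `1 + t‖x‖²`. If `f = ∇φ`, then
`(1 - t)⁻¹ φ((1 - t) D t x)` has gradient `A t x (f ((1 - t) D t x))`, which extends continuously
to `t = 1` and deforms `f` to the field `x ↦ A 1 x (f 0)`. The deformation is proper: for small `t`
because `f` is, and for `t` away from zero because `f` is bounded away from zero, so that the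
expansion of `A` alone makes it coercive. The fields `x ↦ A 1 x v` with `v ≠ 0` are coercive for
the same reason, and in dimension at least two any two nonzero `v` are joined by a path avoiding
zero.
-/

open Set Metric Filter

noncomputable section

/-- Euclidean space `ℝⁿ`. -/
abbrev Euc (n : ℕ) := EuclideanSpace ℝ (Fin n)

/-- A map `f : ℝⁿ → ℝⁿ` is gradient if it is the gradient of a `C¹` function `φ : ℝⁿ → ℝ`. -/
def IsGradient {n : ℕ} (f : Euc n → Euc n) : Prop :=
  ∃ φ : Euc n → ℝ, ContDiff ℝ 1 φ ∧ ∀ x, gradient φ x = f x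

/-- A map is proper if preimages of compact sets are compact (our maps are continuous anyway). -/
def IsProper {n : ℕ} (f : Euc n → Euc n) : Prop :=
  ∀ K : Set (Euc n), IsCompact K → IsCompact (f ⁻¹' K)

/-- `h : [0,1] × ℝⁿ → ℝⁿ` is a gradient homotopy: it is continuous, each `h t` is a
gradient map, and the zero set `h⁻¹(0)` (within `[0,1] × ℝⁿ`) is compact. -/
def IsGradientHomotopy {n : ℕ} (h : ℝ → Euc n → Euc n) : Prop :=
  ContinuousOn (fun p : ℝ × Euc n => h p.1 p.2) (Icc 0 1 ×ˢ univ) ∧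
  (∀ t ∈ Icc (0:ℝ) 1, IsGradient (h t)) ∧
  IsCompact {p : ℝ × Euc n | p.1 ∈ Icc (0:ℝ) 1 ∧ h p.1 p.2 = 0}

/-- Two maps are gradient homotopic if some gradient homotopy connects them. -/
def GradientHomotopic {n : ℕ} (f g : Euc n → Euc n) : Prop :=
  ∃ h : ℝ → Euc n → Euc n, IsGradientHomotopy h ∧ h 0 = f ∧ h 1 = g

/-- `h : [0,1] × ℝⁿ → ℝⁿ` is a proper gradient homotopy: it is continuous, each `h t` is a
gradient map, and `h` is proper as a map on `[0,1] × ℝⁿ`. -/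
def IsProperGradientHomotopy {n : ℕ} (h : ℝ → Euc n → Euc n) : Prop :=
  ContinuousOn (fun p : ℝ × Euc n => h p.1 p.2) (Icc 0 1 ×ˢ univ) ∧
  (∀ t ∈ Icc (0:ℝ) 1, IsGradient (h t)) ∧
  (∀ K : Set (Euc n), IsCompact K →
    IsCompact {p : ℝ × Euc n | p.1 ∈ Icc (0:ℝ) 1 ∧ h p.1 p.2 ∈ K})

/-- Two maps are proper gradient homotopic if some proper gradient homotopy connects them. -/
def ProperGradientHomotopic {n : ℕ} (f g : Euc n → Euc n) : Prop :=
  ∃ h : ℝ → Euc n → Euc n, IsProperGradientHomotopy h ∧ h 0 = f ∧ h 1 = g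

section Gradient

variable {E F : Type*} [NormedAddCommGroup E] [InnerProductSpace ℝ E] [CompleteSpace E]
  [NormedAddCommGroup F] [InnerProductSpace ℝ F] [CompleteSpace F]

lemma hasGradientAt_inner (v x : E) : HasGradientAt (fun y => inner ℝ v y) v x :=
  (innerSL ℝ v).hasFDerivAt

lemma hasGradientAt_comp {φ : F → ℝ} {v : F} {g : E → F} {g' : E →L[ℝ] F} {x : E}
    (hφ : HasGradientAt φ v (g x)) (hg : HasFDerivAt g g' x) :
    HasGradientAt (φ ∘ g) (ContinuousLinearMap.adjoint g' v) x := by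
  rw [hasGradientAt_iff_hasFDerivAt] at hφ ⊢
  refine (hφ.comp x hg).congr_fderiv ?_
  ext w
  simp [ContinuousLinearMap.adjoint_inner_left]

lemma hasGradientAt_const_mul {φ : E → ℝ} {v x : E} (c : ℝ) (hφ : HasGradientAt φ v x) :
    HasGradientAt (fun y => c * φ y) (c • v) x := by
  rw [hasGradientAt_iff_hasFDerivAt] at hφ ⊢
  simpa using hφ.const_mul c

end Gradient

section IsGradient

variable {m n : ℕ} {f : Euc n → Euc n}

lemma isGradient_iff_hasGradientAt :
    IsGradient f ↔ ∃ φ : Euc n → ℝ, ContDiff ℝ 1 φ ∧ ∀ x, HasGradientAt φ (f x) x := by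
  refine exists_congr fun φ => and_congr_right fun hφ => forall_congr' fun x => ?_
  exact ⟨fun h => h ▸ (hφ.differentiable one_ne_zero x).hasGradientAt, HasGradientAt.gradient⟩

lemma IsGradient.continuous (hf : IsGradient f) : Continuous f := by
  obtain ⟨φ, hφ, hφf⟩ := hf
  rw [← funext hφf]
  exact (LinearIsometryEquiv.continuous _).comp (hφ.continuous_fderiv one_ne_zero)

lemma isGradient_const (v : Euc n) : IsGradient fun _ => v :=
  isGradient_iff_hasGradientAt.2
    ⟨fun x => inner ℝ v x, (innerSL ℝ v).contDiff, hasGradientAt_inner v⟩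

lemma IsGradient.const_smul (hf : IsGradient f) (c : ℝ) : IsGradient fun x => c • f x := by
  obtain ⟨φ, hφ, hφf⟩ := isGradient_iff_hasGradientAt.1 hf
  exact isGradient_iff_hasGradientAt.2
    ⟨fun x => c * φ x, contDiff_const.mul hφ, fun x => hasGradientAt_const_mul c (hφf x)⟩

lemma IsGradient.adjoint_fderiv_comp (hf : IsGradient f) {g : Euc m → Euc n}
    (hg : ContDiff ℝ 1 g) :
    IsGradient fun x => ContinuousLinearMap.adjoint (fderiv ℝ g x) (f (g x)) := by
  obtain ⟨φ, hφ, hφf⟩ := isGradient_iff_hasGradientAt.1 hf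
  exact isGradient_iff_hasGradientAt.2 ⟨φ ∘ g, hφ.comp hg, fun x =>
    hasGradientAt_comp (hφf (g x)) (hg.differentiable one_ne_zero x).hasFDerivAt⟩

lemma IsGradient.comp_smul (hf : IsGradient f) (r : ℝ) : IsGradient fun x => f (r • x) := by
  rcases eq_or_ne r 0 with rfl | hr
  · simpa using isGradient_const (f 0)
  · have hpull := hf.adjoint_fderiv_comp (r • ContinuousLinearMap.id ℝ (Euc n)).contDiff
    simp only [ContinuousLinearMap.fderiv, map_smulₛₗ, ContinuousLinearMap.adjoint_id] at hpull
    simpa [hr] using hpull.const_smul r⁻¹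

end IsGradient

section IsProper

variable {n : ℕ} {f : Euc n → Euc n}

lemma IsProper.exists_norm_le (hf : IsProper f) (R : ℝ) : ∃ M, ∀ x, ‖f x‖ ≤ R → ‖x‖ ≤ M := by
  simpa using (hf _ (isCompact_closedBall 0 R)).isBounded.exists_norm_le

lemma IsProper.tendsto_cocompact (hf : IsProper f) :
    Tendsto f (cocompact (Euc n)) (cocompact (Euc n)) :=
  hasBasis_cocompact.tendsto_right_iff.2 fun K hK => (hf K hK).compl_mem_cocompact

lemma IsProper.exists_pos_le_norm (hf : IsProper f) (hcont : Continuous f) (hf0 : ∀ x, f x ≠ 0) :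
    ∃ c > 0, ∀ x, c ≤ ‖f x‖ := by
  obtain ⟨x₀, hx₀⟩ :=
    hcont.norm.exists_forall_le (tendsto_norm_cocompact_atTop.comp hf.tendsto_cocompact)
  exact ⟨‖f x₀‖, norm_pos_iff.2 (hf0 x₀), hx₀⟩

end IsProper

section RadialDilation

variable {E : Type*} [NormedAddCommGroup E] [InnerProductSpace ℝ E]

/-- The map `x ↦ (1 + s‖x‖²) x`, the gradient of `x ↦ ‖x‖² / 2 + s‖x‖⁴ / 4`. Its derivative is
symmetric and, for `s > 0`, expands vectors quadratically in `‖x‖`; this is used to make vector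
fields coercive. -/
def radialDilation (s : ℝ) (x : E) : E := (1 + s * ‖x‖ ^ 2) • x

lemma contDiff_radialDilation (s : ℝ) : ContDiff ℝ 1 (radialDilation s : E → E) :=
  (contDiff_const.add (contDiff_const.mul (contDiff_norm_sq ℝ))).smul contDiff_id

lemma fderiv_radialDilation_apply (s : ℝ) (x w : E) :
    fderiv ℝ (radialDilation s) x w = (1 + s * ‖x‖ ^ 2) • w + (2 * s * inner ℝ x w) • x := by
  have hderiv : HasFDerivAt (radialDilation s) _ x :=
    (((hasStrictFDerivAt_norm_sq x).hasFDerivAt.const_mul s).const_add 1).smul (hasFDerivAt_id x)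
  rw [hderiv.fderiv]
  simp only [add_apply, smul_apply,
    ContinuousLinearMap.smulRight_apply, ContinuousLinearMap.id_apply, innerSL_apply_apply,
    smul_eq_mul, nsmul_eq_mul, Nat.cast_ofNat]
  module

lemma adjoint_fderiv_radialDilation [CompleteSpace E] (s : ℝ) (x : E) :
    ContinuousLinearMap.adjoint (fderiv ℝ (radialDilation s) x) =
      fderiv ℝ (radialDilation s) x := by
  refine ((ContinuousLinearMap.eq_adjoint_iff _ _).2 fun v w => ?_).symm
  simp only [fderiv_radialDilation_apply, inner_add_left, inner_add_right, real_inner_smul_left,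
    real_inner_smul_right, real_inner_comm v x]
  ring

lemma mul_norm_le_norm_fderiv_radialDilation {s : ℝ} (hs : 0 ≤ s) (x w : E) :
    (1 + s * ‖x‖ ^ 2) * ‖w‖ ≤ ‖fderiv ℝ (radialDilation s) x w‖ := by
  rcases eq_or_ne w 0 with rfl | hw
  · simp
  refine le_of_mul_le_mul_right ?_ (norm_pos_iff.2 hw)
  calc (1 + s * ‖x‖ ^ 2) * ‖w‖ * ‖w‖
      ≤ (1 + s * ‖x‖ ^ 2) * ‖w‖ ^ 2 + 2 * s * inner ℝ x w ^ 2 := by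
        nlinarith [mul_nonneg hs (sq_nonneg (inner ℝ x w))]
    _ = inner ℝ (fderiv ℝ (radialDilation s) x w) w := by
        rw [fderiv_radialDilation_apply, inner_add_left, real_inner_smul_left,
          real_inner_smul_left, real_inner_self_eq_norm_sq]
        ring
    _ ≤ ‖fderiv ℝ (radialDilation s) x w‖ * ‖w‖ := real_inner_le_norm _ _

lemma norm_le_norm_fderiv_radialDilation {s : ℝ} (hs : 0 ≤ s) (x w : E) :
    ‖w‖ ≤ ‖fderiv ℝ (radialDilation s) x w‖ := by
  refine le_trans ?_ (mul_norm_le_norm_fderiv_radialDilation hs x w)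
  exact le_mul_of_one_le_left (norm_nonneg w) (le_add_of_nonneg_right (by positivity))

lemma norm_mul_norm_le_norm_fderiv_radialDilation {s : ℝ} (hs : 1 / 4 ≤ s) (x w : E) :
    ‖x‖ * ‖w‖ ≤ ‖fderiv ℝ (radialDilation s) x w‖ := by
  refine le_trans ?_ (mul_norm_le_norm_fderiv_radialDilation (by linarith) x w)
  gcongr
  nlinarith [sq_nonneg (‖x‖ / 2 - 1), sq_nonneg ‖x‖]

lemma norm_le_norm_radialDilation {s : ℝ} (hs : 0 ≤ s) (x : E) : ‖x‖ ≤ ‖radialDilation s x‖ := by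
  rw [radialDilation, norm_smul, Real.norm_of_nonneg (by positivity)]
  exact le_mul_of_one_le_left (norm_nonneg x) (le_add_of_nonneg_right (by positivity))

lemma norm_le_div_of_norm_fderiv_radialDilation_le {s c R : ℝ} {x w : E} (hs : 1 / 4 ≤ s)
    (hc : 0 < c) (hw : c ≤ ‖w‖) (hR : ‖fderiv ℝ (radialDilation s) x w‖ ≤ R) : ‖x‖ ≤ R / c := by
  rw [le_div_iff₀ hc]
  calc ‖x‖ * c ≤ ‖x‖ * ‖w‖ := by gcongr
    _ ≤ ‖fderiv ℝ (radialDilation s) x w‖ := norm_mul_norm_le_norm_fderiv_radialDilation hs x w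
    _ ≤ R := hR

lemma continuous_fderiv_radialDilation_apply {X : Type*} [TopologicalSpace X] {s : X → ℝ}
    {x w : X → E} (hs : Continuous s) (hx : Continuous x) (hw : Continuous w) :
    Continuous fun p => fderiv ℝ (radialDilation (s p)) (x p) (w p) := by
  simp only [fderiv_radialDilation_apply]
  fun_prop

lemma IsGradient.fderiv_radialDilation_comp {n : ℕ} {f : Euc n → Euc n} (hf : IsGradient f)
    (s : ℝ) : IsGradient fun x => fderiv ℝ (radialDilation s) x (f (radialDilation s x)) := by
  simpa only [adjoint_fderiv_radialDilation] using
    hf.adjoint_fderiv_comp (contDiff_radialDilation s)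

end RadialDilation

section ProperGradientHomotopic

lemma isCompact_setOf_mem_and_map_mem {X Y Z : Type*} [TopologicalSpace X] [T2Space X]
    [TopologicalSpace Y] [TopologicalSpace Z] {h : X → Y → Z} {s : Set X} {C : Set Y} {K : Set Z}
    (hs : IsCompact s) (hcont : ContinuousOn (fun p : X × Y => h p.1 p.2) (s ×ˢ univ))
    (hK : IsClosed K) (hC : IsCompact C) (hsub : ∀ t ∈ s, ∀ x, h t x ∈ K → x ∈ C) :
    IsCompact {p : X × Y | p.1 ∈ s ∧ h p.1 p.2 ∈ K} := by
  refine (hs.prod hC).of_isClosed_subset ?_ fun p hp => ⟨hp.1, hsub _ hp.1 _ hp.2⟩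
  convert hcont.preimage_isClosed_of_isClosed (hs.isClosed.prod isClosed_univ) hK using 1
  ext p
  simp

variable {n : ℕ} {f g k : Euc n → Euc n} {h h' : ℝ → Euc n → Euc n} {s s' : Set ℝ}

/-- Proper gradient homotopies with time set `s` in place of `[0,1]`, so that homotopies can be
reparametrized and glued along their time sets. -/
def IsProperGradientHomotopyOn (s : Set ℝ) (h : ℝ → Euc n → Euc n) : Prop :=
  ContinuousOn (fun p : ℝ × Euc n => h p.1 p.2) (s ×ˢ univ) ∧
  (∀ t ∈ s, IsGradient (h t)) ∧
  (∀ K : Set (Euc n), IsCompact K → IsCompact {p : ℝ × Euc n | p.1 ∈ s ∧ h p.1 p.2 ∈ K})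

lemma isProperGradientHomotopyOn_Icc :
    IsProperGradientHomotopyOn (Icc 0 1) h ↔ IsProperGradientHomotopy h := Iff.rfl

lemma isProperGradientHomotopyOn_of_norm_le (hs : IsCompact s)
    (hcont : ContinuousOn (fun p : ℝ × Euc n => h p.1 p.2) (s ×ˢ univ))
    (hgrad : ∀ t ∈ s, IsGradient (h t))
    (hbound : ∀ R, ∃ M, ∀ t ∈ s, ∀ x, ‖h t x‖ ≤ R → ‖x‖ ≤ M) :
    IsProperGradientHomotopyOn s h := by
  refine ⟨hcont, hgrad, fun K hK => ?_⟩
  obtain ⟨R, hR⟩ := hK.isBounded.exists_norm_le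
  obtain ⟨M, hM⟩ := hbound R
  exact isCompact_setOf_mem_and_map_mem hs hcont hK.isClosed (isCompact_closedBall 0 M)
    fun t ht x hx => mem_closedBall_zero_iff.2 (hM t ht x (hR _ hx))

namespace IsProperGradientHomotopyOn

lemma congr (H : IsProperGradientHomotopyOn s h) (heq : EqOn h' h s) :
    IsProperGradientHomotopyOn s h' := by
  obtain ⟨hcont, hgrad, hproper⟩ := H
  refine ⟨hcont.congr fun p hp => congrFun (heq hp.1) p.2, fun t ht => heq ht ▸ hgrad t ht,
    fun K hK => ?_⟩
  convert hproper K hK using 3 with p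
  exact and_congr_right fun hp => by rw [heq hp]

lemma comp {φ : ℝ → ℝ} (H : IsProperGradientHomotopyOn s h) (hs' : IsCompact s')
    (hφ : ContinuousOn φ s') (hmaps : MapsTo φ s' s) :
    IsProperGradientHomotopyOn s' fun t => h (φ t) := by
  obtain ⟨hcont, hgrad, hproper⟩ := H
  have hcont_comp : ContinuousOn (fun p : ℝ × Euc n => h (φ p.1) p.2) (s' ×ˢ univ) :=
    hcont.comp (hφ.prodMap continuousOn_id) fun p hp => ⟨hmaps hp.1, mem_univ _⟩
  refine ⟨hcont_comp, fun t ht => hgrad _ (hmaps ht), fun K hK => ?_⟩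
  exact isCompact_setOf_mem_and_map_mem hs' hcont_comp hK.isClosed
    ((hproper K hK).image continuous_snd) fun t ht x hx => ⟨(φ t, x), ⟨hmaps ht, hx⟩, rfl⟩

lemma union (H : IsProperGradientHomotopyOn s h) (H' : IsProperGradientHomotopyOn s' h)
    (hs : IsClosed s) (hs' : IsClosed s') : IsProperGradientHomotopyOn (s ∪ s') h := by
  obtain ⟨hcont, hgrad, hproper⟩ := H
  obtain ⟨hcont', hgrad', hproper'⟩ := H'
  refine ⟨?_, fun t ht => ht.elim (hgrad t) (hgrad' t), fun K hK => ?_⟩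
  · rw [union_prod]
    exact hcont.union_of_isClosed hcont' (hs.prod isClosed_univ) (hs'.prod isClosed_univ)
  · convert (hproper K hK).union (hproper' K hK) using 1
    ext p
    exact or_and_right

end IsProperGradientHomotopyOn

lemma ProperGradientHomotopic.symm (H : ProperGradientHomotopic f g) :
    ProperGradientHomotopic g f := by
  obtain ⟨h, hh, rfl, rfl⟩ := H
  refine ⟨fun t => h (1 - t), isProperGradientHomotopyOn_Icc.1 ?_, by simp, by simp⟩
  exact (isProperGradientHomotopyOn_Icc.2 hh).comp isCompact_Icc (by fun_prop)
    fun t ht => ⟨sub_nonneg.2 ht.2, sub_le_self 1 ht.1⟩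

lemma ProperGradientHomotopic.trans (H : ProperGradientHomotopic f g)
    (H' : ProperGradientHomotopic g k) : ProperGradientHomotopic f k := by
  obtain ⟨h, hh, rfl, rfl⟩ := H
  obtain ⟨h', hh', hjoin, rfl⟩ := H'
  let concat (t : ℝ) : Euc n → Euc n := if t ≤ 1 / 2 then h (2 * t) else h' (2 * t - 1)
  have hleft : EqOn concat (fun t => h (2 * t)) (Icc 0 (1 / 2)) := fun t ht => if_pos ht.2
  have hright : EqOn concat (fun t => h' (2 * t - 1)) (Icc (1 / 2) 1) := by
    intro t ht
    rcases ht.1.eq_or_lt with rfl | hlt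
    · norm_num [concat, hjoin]
    · exact if_neg hlt.not_ge
  have hconcat_left : IsProperGradientHomotopyOn (Icc 0 (1 / 2)) concat :=
    ((isProperGradientHomotopyOn_Icc.2 hh).comp isCompact_Icc (by fun_prop)
      fun t ht => ⟨by linarith [ht.1], by linarith [ht.2]⟩).congr hleft
  have hconcat_right : IsProperGradientHomotopyOn (Icc (1 / 2) 1) concat :=
    ((isProperGradientHomotopyOn_Icc.2 hh').comp isCompact_Icc (by fun_prop)
      fun t ht => ⟨by linarith [ht.1], by linarith [ht.2]⟩).congr hright
  refine ⟨concat, isProperGradientHomotopyOn_Icc.1 ?_, by simp [concat], by norm_num [concat]⟩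
  rw [← Icc_union_Icc_eq_Icc (b := (1 / 2 : ℝ)) (by norm_num) (by norm_num)]
  exact hconcat_left.union hconcat_right isClosed_Icc isClosed_Icc

lemma properGradientHomotopic_fderiv_radialDilation_of_isProper (hf : IsGradient f)
    (hfp : IsProper f) (hf0 : ∀ x, f x ≠ 0) :
    ProperGradientHomotopic f fun x => fderiv ℝ (radialDilation 1) x (f 0) := by
  obtain ⟨c, hc, hcf⟩ := hfp.exists_pos_le_norm hf.continuous hf0
  let h (t : ℝ) (x : Euc n) : Euc n :=
    fderiv ℝ (radialDilation t) x (f ((1 - t) • radialDilation t x))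
  have hbound : ∀ R, ∃ M, ∀ t ∈ Icc (0 : ℝ) 1, ∀ x, ‖h t x‖ ≤ R → ‖x‖ ≤ M := by
    intro R
    obtain ⟨M, hM⟩ := hfp.exists_norm_le R
    refine ⟨max (2 * M) (R / c), fun t ⟨ht0, ht1⟩ x hx => ?_⟩
    rcases le_total t (1 / 2) with ht | ht
    · refine le_max_of_le_left ?_
      have hMx := hM _ ((norm_le_norm_fderiv_radialDilation ht0 _ _).trans hx)
      rw [norm_smul, Real.norm_of_nonneg (sub_nonneg.2 ht1)] at hMx
      nlinarith [norm_le_norm_radialDilation ht0 x, norm_nonneg x]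
    · exact le_max_of_le_right
        (norm_le_div_of_norm_fderiv_radialDilation_le (by linarith) hc (hcf _) hx)
  have hcont : Continuous fun p : ℝ × Euc n => h p.1 p.2 := by
    have hfcont := hf.continuous
    refine continuous_fderiv_radialDilation_apply continuous_fst continuous_snd ?_
    unfold radialDilation
    fun_prop
  have hproper : IsProperGradientHomotopyOn (Icc 0 1) h :=
    isProperGradientHomotopyOn_of_norm_le isCompact_Icc hcont.continuousOn
      (fun t _ => (hf.comp_smul (1 - t)).fderiv_radialDilation_comp t) hbound
  refine ⟨h, isProperGradientHomotopyOn_Icc.1 hproper, ?_, ?_⟩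
  · ext1 x
    simp [h, fderiv_radialDilation_apply, radialDilation]
  · ext1 x
    simp [h]

lemma properGradientHomotopic_fderiv_radialDilation_of_joinedIn {v w : Euc n}
    (hvw : JoinedIn {0}ᶜ v w) :
    ProperGradientHomotopic (fun x => fderiv ℝ (radialDilation 1) x v)
      fun x => fderiv ℝ (radialDilation 1) x w := by
  obtain ⟨γ, hγ⟩ := hvw
  obtain ⟨t₀, ht₀⟩ := γ.continuous.norm.exists_forall_le (by simp)
  let h (t : ℝ) (x : Euc n) : Euc n := fderiv ℝ (radialDilation 1) x (γ.extend t)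
  have hbound (R : ℝ) : ∃ M, ∀ t ∈ Icc (0 : ℝ) 1, ∀ x, ‖h t x‖ ≤ R → ‖x‖ ≤ M :=
    ⟨R / ‖γ t₀‖, fun t _ x => norm_le_div_of_norm_fderiv_radialDilation_le (by norm_num)
      (norm_pos_iff.2 (hγ t₀)) (ht₀ _)⟩
  have hcont : Continuous fun p : ℝ × Euc n => h p.1 p.2 :=
    continuous_fderiv_radialDilation_apply continuous_const continuous_snd (by fun_prop)
  have hproper : IsProperGradientHomotopyOn (Icc 0 1) h :=
    isProperGradientHomotopyOn_of_norm_le isCompact_Icc hcont.continuousOn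
      (fun t _ => (isGradient_const (γ.extend t)).fderiv_radialDilation_comp 1) hbound
  exact ⟨h, isProperGradientHomotopyOn_Icc.1 hproper, by simp [h], by simp [h]⟩

end ProperGradientHomotopic

/-- for `n ≥ 2`, any two proper gradient maps `ℝⁿ → ℝⁿ` with no zeros are
proper gradient homotopic. -/
theorem proper_gradient_no_zeros_homotopic (n : ℕ) (hn : 2 ≤ n)
    (f f' : Euc n → Euc n)
    (hf : IsGradient f) (hfp : IsProper f) (hf0 : ∀ x, f x ≠ 0)
    (hf' : IsGradient f') (hf'p : IsProper f') (hf'0 : ∀ x, f' x ≠ 0) :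
    ProperGradientHomotopic f f' := by
  have hrank : 1 < Module.rank ℝ (Euc n) := by
    rw [← Module.finrank_eq_rank, finrank_euclideanSpace_fin]
    exact_mod_cast hn
  have hjoined : JoinedIn {0}ᶜ (f 0) (f' 0) :=
    (isPathConnected_compl_singleton_of_one_lt_rank hrank 0).joinedIn _ (hf0 0) _ (hf'0 0)
  have hcubic := properGradientHomotopic_fderiv_radialDilation_of_joinedIn hjoined
  have hcubic_f := properGradientHomotopic_fderiv_radialDilation_of_isProper hf hfp hf0
  have hcubic_f' := properGradientHomotopic_fderiv_radialDilation_of_isProper hf' hf'p hf'0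
  exact (hcubic_f.trans hcubic).trans hcubic_f'.symm
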